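/- arXiv:2311.06591 — 2 statements merged into one kernel-verified Lean document; each statement's English description precedes it below -/
import Mathlib

section
/- For every τ in the complex upper half-plane: β(−1/τ) = α(τ/3) and α(−1/τ) = β(τ/3); moreover β(−1/τ)·(β(τ) − 3) = 3·(β(τ) + 6) and α(−1/τ)·(α(τ/9) − 3) = 3·(α(τ/9) + 6). -/
open Complex

/-- The Dedekind eta function `η(τ) = e^{πiτ/12} ∏_{n≥1} (1 - e^{2πinτ})`. -/
noncomputable def dedekindEta (τ : ℂ) : ℂ :=
  Complex.exp (Real.pi * I * τ / 12) *
    ∏' n : ℕ, (1 - Complex.exp (2 * Real.pi * I * (n + 1) * τ))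

/-- `α(τ) = 3 + 27 η(9τ)³/η(τ)³`. -/
noncomputable def alpha (τ : ℂ) : ℂ :=
  3 + 27 * dedekindEta (9 * τ) ^ 3 / dedekindEta τ ^ 3

/-- `β(τ) = 3 + η(τ/3)³/η(3τ)³`. -/
noncomputable def beta (τ : ℂ) : ℂ :=
  3 + dedekindEta (τ / 3) ^ 3 / dedekindEta (3 * τ) ^ 3

theorem dedekindEta_eq_eta (z : ℂ) : dedekindEta z = ModularForm.eta z := by
  simp only [dedekindEta, ModularForm.eta, ModularForm.eta_q_eq_cexp, Function.Periodic.qParam]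
  congr 2
  push_cast
  ring

theorem dedekindEta_ne_zero {z : ℂ} (hz : 0 < z.im) : dedekindEta z ≠ 0 := by
  rw [dedekindEta_eq_eta]
  exact ModularForm.eta_ne_zero hz

theorem dedekindEta_neg_one_div {z : ℂ} (hz : 0 < z.im) :
    dedekindEta (-1 / z) = (sqrt I)⁻¹ * (sqrt z * dedekindEta z) := by
  simpa [dedekindEta_eq_eta] using ModularForm.eta_comp_eq_csqrt_I_inv hz

theorem sqrt_sq_mul {r : ℝ} (hr : 0 < r) {z : ℂ} (hz : z ≠ 0) :
    sqrt ((r : ℂ) ^ 2 * z) = r * sqrt z := by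
  have hr0 : (r : ℂ) ≠ 0 := by exact_mod_cast hr.ne'
  rw [sqrt_eq_exp (mul_ne_zero (pow_ne_zero 2 hr0) hz), sqrt_eq_exp hz, ← ofReal_pow,
    log_ofReal_mul (by positivity) hz, Real.log_pow, add_div, exp_add]
  push_cast
  rw [mul_div_cancel_left₀ _ two_ne_zero, ← ofReal_exp, Real.exp_log hr]

/-- Inversion of the quotient `η(9z)³/η(z)³`. -/
theorem dedekindEta_quotient_inversion {z : ℂ} (hz : 0 < z.im) :
    dedekindEta (-1 / (9 * z)) ^ 3 / dedekindEta (-1 / z) ^ 3 =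
      27 * (dedekindEta (9 * z) ^ 3 / dedekindEta z ^ 3) := by
  have hz0 : z ≠ 0 := fun h => by simp [h] at hz
  have h9 : 0 < (9 * z).im := by simpa using hz
  have hI : sqrt I ≠ 0 := by simp [sqrt]
  have hs : sqrt z ≠ 0 := by simp [sqrt, hz0]
  have hη := dedekindEta_ne_zero hz
  rw [dedekindEta_neg_one_div h9, dedekindEta_neg_one_div hz,
    show 9 * z = ((3 : ℝ) : ℂ) ^ 2 * z by push_cast; ring, sqrt_sq_mul three_pos hz0]
  field_simp
  push_cast
  ring

/-- For `τ` in the upper half-plane: `β(−1/τ) = α(τ/3)`, `α(−1/τ) = β(τ/3)`,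
`β(−1/τ)(β(τ) − 3) = 3(β(τ) + 6)` and `α(−1/τ)(α(τ/9) − 3) = 3(α(τ/9) + 6)`. -/
theorem alpha_beta_full_inversion (τ : ℂ) (hτ : 0 < τ.im) :
    beta (-1 / τ) = alpha (τ / 3) ∧
    alpha (-1 / τ) = beta (τ / 3) ∧
    beta (-1 / τ) * (beta τ - 3) = 3 * (beta τ + 6) ∧
    alpha (-1 / τ) * (alpha (τ / 9) - 3) = 3 * (alpha (τ / 9) + 6) := by
  have h3 : 0 < (τ / 3).im := by simpa using hτ
  have h9 : 0 < (τ / 9).im := by simpa using hτ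
  have hm3 : 0 < (3 * τ).im := by simpa using hτ
  have hβ : beta (-1 / τ) = alpha (τ / 3) := by
    have h := dedekindEta_quotient_inversion h3
    rw [show 9 * (τ / 3) = 3 * τ by ring] at h
    rw [beta, alpha, show -1 / τ / 3 = -1 / (3 * τ) by ring,
      show 3 * (-1 / τ) = -1 / (τ / 3) by field_simp, h, show 9 * (τ / 3) = 3 * τ by ring,
      mul_div_assoc]
  have hα : alpha (-1 / τ) = beta (τ / 3) := by
    have h := dedekindEta_quotient_inversion h9
    rw [show 9 * (τ / 9) = τ by ring] at h
    have hinv := congrArg (·⁻¹) h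
    simp only [inv_div, mul_inv] at hinv
    rw [beta, alpha, show 9 * (-1 / τ) = -1 / (τ / 9) by field_simp,
      show τ / 3 / 3 = τ / 9 by ring, show 3 * (τ / 3) = τ by ring, mul_div_assoc, hinv]
    ring
  refine ⟨hβ, hα, ?_, ?_⟩
  · have h₁ := dedekindEta_ne_zero h3
    have h₂ := dedekindEta_ne_zero hm3
    rw [hβ, alpha, beta, show 9 * (τ / 3) = 3 * τ by ring]
    field_simp
    ring
  · have h₁ := dedekindEta_ne_zero h9
    have h₂ := dedekindEta_ne_zero hτ
    rw [hα, alpha, beta, show τ / 3 / 3 = τ / 9 by ring, show 3 * (τ / 3) = τ by ring,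
      show 9 * (τ / 9) = τ by ring]
    field_simp
    ring
end

section
/- For every τ in the complex upper half-plane, (1 − 7c(τ)³ − 8c(τ)⁶)·η(3τ)⁴·η(6τ)⁴ = c(τ)³·η(τ)⁴·η(2τ)⁴; equivalently 1/c(τ)³ − 7 − 8c(τ)³ = η(τ)⁴η(2τ)⁴/(η(3τ)⁴η(6τ)⁴). -/
open Complex

/-- The nome `q = exp(2πiτ)`. -/
noncomputable def nome (τ : ℂ) : ℂ := Complex.exp (2 * Real.pi * I * τ)

/-- Ramanujan's cubic continued fraction, as an infinite product:
`c(τ) = q^{1/3} ∏_{n≥1} (1-q^{6n-1})(1-q^{6n-5})/(1-q^{6n-3})²`. -/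
noncomputable def c (τ : ℂ) : ℂ :=
  Complex.exp (2 * Real.pi * I * τ / 3) *
    ∏' n : ℕ,
      ((1 - nome τ ^ (6 * (n + 1) - 1)) * (1 - nome τ ^ (6 * (n + 1) - 5)) /
        (1 - nome τ ^ (6 * (n + 1) - 3)) ^ 2)

/-- The infinite `q`-Pochhammer symbol `(a; q)_∞ = ∏_{n ≥ 0} (1 - a q ^ n)`. -/
noncomputable def qPoch (a q : ℂ) : ℂ := ∏' n : ℕ, (1 - a * q ^ n)

section QPochhammer

variable {q : ℂ}

lemma summable_norm_mul_pow (a : ℂ) (hq : ‖q‖ < 1) : Summable fun n : ℕ ↦ ‖-(a * q ^ n)‖ := by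
  simpa using (summable_geometric_of_lt_one (norm_nonneg q) hq).mul_left ‖a‖

lemma multipliable_one_sub_mul_pow (a : ℂ) (hq : ‖q‖ < 1) :
    Multipliable fun n : ℕ ↦ 1 - a * q ^ n := by
  simpa [sub_eq_add_neg] using multipliable_one_add_of_summable (summable_norm_mul_pow a hq)

lemma tendsto_prod_range_qPoch (a : ℂ) (hq : ‖q‖ < 1) :
    Filter.Tendsto (fun N ↦ ∏ n ∈ Finset.range N, (1 - a * q ^ n)) Filter.atTop
      (nhds (qPoch a q)) :=
  (multipliable_one_sub_mul_pow a hq).tendsto_prod_tprod_nat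

lemma one_sub_mul_pow_ne_zero {a : ℂ} (ha : ‖a‖ < 1) (hq : ‖q‖ < 1) (n : ℕ) :
    1 - a * q ^ n ≠ 0 := by
  intro h
  have h1 : ‖a * q ^ n‖ = 1 := by rw [← sub_eq_zero.mp h, norm_one]
  rw [norm_mul, norm_pow] at h1
  have h2 : ‖q‖ ^ n ≤ 1 := pow_le_one₀ (norm_nonneg q) hq.le
  nlinarith [norm_nonneg a]

lemma qPoch_ne_zero {a : ℂ} (ha : ‖a‖ < 1) (hq : ‖q‖ < 1) : qPoch a q ≠ 0 := by
  have := tprod_one_add_ne_zero_of_summable (f := fun n : ℕ ↦ -(a * q ^ n))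
    (fun n ↦ by simpa [sub_eq_add_neg] using one_sub_mul_pow_ne_zero ha hq n)
    (summable_norm_mul_pow a hq)
  simpa [qPoch, sub_eq_add_neg] using this

lemma qPoch_eq_prod (a : ℂ) (hq : ‖q‖ < 1) (k : ℕ) [NeZero k] :
    qPoch a q = ∏ i : Fin k, qPoch (a * q ^ (i : ℕ)) (q ^ k) := by
  have hqk : ‖q ^ k‖ < 1 := by
    rw [norm_pow]; exact pow_lt_one₀ (norm_nonneg q) hq (NeZero.ne k)
  obtain ⟨e, hek⟩ : ∃ e : Fin k × ℕ ≃ ℕ, ∀ i m, e (i, m) = m * k + i :=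
    ⟨(Equiv.prodComm _ _).trans (Nat.divModEquiv k).symm, fun i m ↦ by simp [Nat.divModEquiv]⟩
  have he (i : Fin k) (m : ℕ) :
      1 - a * q ^ e (i, m) = 1 - a * q ^ (i : ℕ) * (q ^ k) ^ m := by
    rw [hek, pow_add, pow_mul']
    ring
  have hm : Multipliable fun p : Fin k × ℕ ↦ 1 - a * q ^ e p :=
    e.multipliable_iff.mpr (multipliable_one_sub_mul_pow a hq)
  rw [qPoch, ← e.tprod_eq, hm.tprod_prod' fun i ↦ ?_, tprod_fintype]
  · exact Finset.prod_congr rfl fun i _ ↦ tprod_congr (he i)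
  · simpa only [he] using multipliable_one_sub_mul_pow _ hqk

lemma qPoch_split_two (a : ℂ) (hq : ‖q‖ < 1) :
    qPoch a q = qPoch a (q ^ 2) * qPoch (a * q) (q ^ 2) := by
  simpa [Fin.prod_univ_succ] using qPoch_eq_prod a hq 2

lemma qPoch_split_three (a : ℂ) (hq : ‖q‖ < 1) :
    qPoch a q = qPoch a (q ^ 3) * qPoch (a * q) (q ^ 3) * qPoch (a * q ^ 2) (q ^ 3) := by
  simpa [Fin.prod_univ_succ, mul_assoc] using qPoch_eq_prod a hq 3

lemma qPoch_mul_qPoch_neg (a : ℂ) (hq : ‖q‖ < 1) :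
    qPoch a q * qPoch (-a) q = qPoch (a ^ 2) (q ^ 2) := by
  simp only [qPoch]
  rw [← (multipliable_one_sub_mul_pow _ hq).tprod_mul (multipliable_one_sub_mul_pow _ hq)]
  exact tprod_congr fun n ↦ by ring

lemma qPoch_mul_cube_roots {ω : ℂ} (hω : ω ^ 2 + ω + 1 = 0) (a : ℂ) (hq : ‖q‖ < 1) :
    qPoch a q * qPoch (ω * a) q * qPoch (ω ^ 2 * a) q = qPoch (a ^ 3) (q ^ 3) := by
  have hm (b : ℂ) := multipliable_one_sub_mul_pow b hq
  simp only [qPoch]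
  rw [← (hm _).tprod_mul (hm _), ← ((hm _).mul (hm _)).tprod_mul (hm _)]
  refine tprod_congr fun n ↦ ?_
  obtain ⟨y, hy⟩ : ∃ y, y = a * q ^ n := ⟨_, rfl⟩
  have h1 : a ^ 3 * (q ^ 3) ^ n = y ^ 3 := by rw [hy]; ring
  simp only [mul_assoc, ← hy, h1]
  linear_combination (-y + y ^ 2 * ω - y ^ 3 * (ω - 1)) * hω

end QPochhammer

section TripleProduct

/-- The general term of Ramanujan's theta function `f(a, b)`. -/
noncomputable def thetaTerm (a b : ℂ) (n : ℤ) : ℂ := a ^ (n * (n + 1) / 2) * b ^ (n * (n - 1) / 2)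

variable {a b : ℂ}

lemma thetaTerm_add_one (ha : a ≠ 0) (hb : b ≠ 0) (n : ℤ) :
    thetaTerm a b (n + 1) = a * (a * b) ^ n * thetaTerm a b n := by
  have h1 : (n + 1) * (n + 1 + 1) / 2 = n * (n + 1) / 2 + (n + 1) := by
    rw [← Int.add_mul_ediv_right _ _ two_ne_zero]; ring_nf
  have h2 : (n + 1) * (n + 1 - 1) / 2 = n * (n - 1) / 2 + n := by
    rw [← Int.add_mul_ediv_right _ _ two_ne_zero]; ring_nf
  rw [thetaTerm, thetaTerm, h1, h2, zpow_add₀ ha, zpow_add₀ hb, zpow_add_one₀ ha, mul_zpow]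
  ring

lemma thetaTerm_neg (n : ℤ) : thetaTerm a b (-n) = thetaTerm b a n := by
  rw [thetaTerm, thetaTerm, mul_comm]
  congr 3 <;> ring_nf

lemma thetaTerm_ne_zero (ha : a ≠ 0) (hb : b ≠ 0) (n : ℤ) : thetaTerm a b n ≠ 0 :=
  mul_ne_zero (zpow_ne_zero _ ha) (zpow_ne_zero _ hb)

lemma summable_norm_thetaTerm_nat (ha : a ≠ 0) (hb : b ≠ 0) (h : ‖a * b‖ < 1) :
    Summable fun n : ℕ ↦ ‖thetaTerm a b n‖ := by
  refine summable_of_ratio_test_tendsto_lt_one (l := 0) zero_lt_one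
    (.of_forall fun n ↦ norm_ne_zero_iff.mpr (thetaTerm_ne_zero ha hb n)) ?_
  have : Filter.Tendsto (fun n : ℕ ↦ ‖a‖ * ‖a * b‖ ^ n) Filter.atTop (nhds 0) := by
    simpa using (tendsto_pow_atTop_nhds_zero_of_lt_one (norm_nonneg _) h).const_mul ‖a‖
  refine this.congr fun n ↦ ?_
  rw [norm_norm, norm_norm, eq_div_iff (norm_ne_zero_iff.mpr (thetaTerm_ne_zero ha hb n))]
  push_cast
  rw [thetaTerm_add_one ha hb, zpow_natCast]
  simp only [norm_mul, norm_pow]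

lemma summable_norm_thetaTerm (ha : a ≠ 0) (hb : b ≠ 0) (h : ‖a * b‖ < 1) :
    Summable fun n : ℤ ↦ ‖thetaTerm a b n‖ := by
  refine .of_nat_of_neg (summable_norm_thetaTerm_nat ha hb h) ?_
  simpa only [thetaTerm_neg] using summable_norm_thetaTerm_nat hb ha (mul_comm a b ▸ h)

/-- The reciprocal of `(q; q)_m`, extended by zero to negative `m`. -/
noncomputable def invQFactorial (q : ℂ) (m : ℤ) : ℂ :=
  if 0 ≤ m then (∏ i ∈ Finset.range m.toNat, (1 - q * q ^ i))⁻¹ else 0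

lemma invQFactorial_sub_one {q : ℂ} (hq : ‖q‖ < 1) (m : ℤ) :
    invQFactorial q (m - 1) = (1 - q ^ m) * invQFactorial q m := by
  rcases lt_trichotomy m 0 with hm | rfl | hm
  · rw [invQFactorial, invQFactorial, if_neg (by lia), if_neg (by lia), mul_zero]
  · simp [invQFactorial]
  · obtain ⟨k, rfl⟩ : ∃ k : ℕ, m = k + 1 := ⟨(m - 1).toNat, by lia⟩
    have hk : ((k : ℤ) + 1).toNat = k + 1 := by lia
    rw [invQFactorial, invQFactorial, if_pos (by lia), if_pos (by lia), add_sub_cancel_right, hk,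
      Int.toNat_natCast, Finset.prod_range_succ, mul_inv, ← Nat.cast_succ, zpow_natCast, pow_succ']
    have := one_sub_mul_pow_ne_zero hq hq k
    field_simp

/-- The Pascal-type recurrence of the coefficients in the finite triple product. -/
lemma invQFactorial_recurrence {p : ℂ} (hp : p ≠ 0) (h : ‖p‖ < 1) (N : ℕ) (n : ℤ) :
    (1 - p * p ^ (2 * N)) * (1 - p * p ^ (2 * N + 1)) *
        invQFactorial p (N + 1 + n) * invQFactorial p (N + 1 - n) =
      (1 + p ^ (2 * N + 1)) * (invQFactorial p (N + n) * invQFactorial p (N - n)) +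
      p ^ (N + 1 - n : ℤ) * (invQFactorial p (N + (n - 1)) * invQFactorial p (N - (n - 1))) +
      p ^ (N + 1 + n : ℤ) * (invQFactorial p (N + (n + 1)) * invQFactorial p (N - (n + 1))) := by
  have shift (m : ℤ) : invQFactorial p (m - 1 - 1) =
      (1 - p ^ m / p) * ((1 - p ^ m) * invQFactorial p m) := by
    rw [invQFactorial_sub_one h, invQFactorial_sub_one h, zpow_sub_one₀ hp, div_eq_mul_inv]
  have hXY : p ^ (N + 1 + n : ℤ) * p ^ (N + 1 - n : ℤ) = p * p ^ (2 * N + 1) := by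
    rw [← zpow_add₀ hp, ← pow_succ', ← zpow_natCast]; push_cast; ring_nf
  have hXY' : p * p ^ (2 * N) = p ^ (N + 1 + n : ℤ) * p ^ (N + 1 - n : ℤ) / p := by
    rw [hXY, ← pow_succ']; field_simp
  rw [pow_succ' p (2 * N), hXY', mul_div_cancel₀ _ hp,
    show (N + n : ℤ) = N + 1 + n - 1 by ring, show (N - n : ℤ) = N + 1 - n - 1 by ring,
    show (N + (n - 1) : ℤ) = N + 1 + n - 1 - 1 by ring,
    show (N - (n - 1) : ℤ) = N + 1 - n by ring, show (N + (n + 1) : ℤ) = N + 1 + n by ring,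
    show (N - (n + 1) : ℤ) = N + 1 - n - 1 - 1 by ring, shift, shift,
    invQFactorial_sub_one h, invQFactorial_sub_one h]
  generalize p ^ (N + 1 + n : ℤ) = X
  generalize p ^ (N + 1 - n : ℤ) = Y
  field_simp
  ring

/-- The finite form of the Jacobi triple product. -/
lemma hasSum_finite_triple_product (ha : a ≠ 0) (hb : b ≠ 0) (h : ‖a * b‖ < 1) (N : ℕ) :
    HasSum (fun n : ℤ ↦ (∏ i ∈ Finset.range (2 * N), (1 - a * b * (a * b) ^ i)) *
        invQFactorial (a * b) (N + n) * invQFactorial (a * b) (N - n) * thetaTerm a b n)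
      ((∏ i ∈ Finset.range N, (1 - -a * (a * b) ^ i)) *
        ∏ i ∈ Finset.range N, (1 - -b * (a * b) ^ i)) := by
  have hab := mul_ne_zero ha hb
  induction N with
  | zero =>
    convert hasSum_single (0 : ℤ) fun n hn ↦ ?_ using 1
    · simp [invQFactorial, thetaTerm]
    · rcases hn.lt_or_gt with hn | hn
      · simp [invQFactorial, hn.not_ge]
      · simp [invQFactorial, hn.not_ge]
  | succ N ih =>
    have h1 := (Equiv.subRight (1 : ℤ)).hasSum_iff.mpr ih
    have h2 := (Equiv.addRight (1 : ℤ)).hasSum_iff.mpr ih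
    have hsum := ((ih.mul_left (1 + (a * b) ^ (2 * N + 1))).add
      (h1.mul_left (a * (a * b) ^ N))).add (h2.mul_left (b * (a * b) ^ N))
    rw [← add_mul, ← add_mul] at hsum
    have hval (P Q x : ℂ) : P * (1 - -a * x) * (Q * (1 - -b * x)) =
        (1 + a * b * (x * x) + a * x + b * x) * (P * Q) := by ring
    rw [Finset.prod_range_succ, Finset.prod_range_succ, hval, ← pow_add, ← pow_succ', ← two_mul]
    refine (congrArg (HasSum · _) (funext fun n ↦ ?_)).mpr hsum
    simp only [Function.comp_apply, Equiv.subRight_apply, Equiv.coe_addRight]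
    have hT : a * (a * b) ^ N * thetaTerm a b (n - 1) =
        (a * b) ^ (N + 1 - n : ℤ) * thetaTerm a b n := by
      have := thetaTerm_add_one ha hb (n - 1)
      rw [sub_add_cancel] at this
      rw [this, show (N + 1 - n : ℤ) = N - (n - 1) by ring, zpow_sub₀ hab, zpow_natCast]
      generalize hy : (a * b) ^ (n - 1) = y
      have : y ≠ 0 := hy ▸ zpow_ne_zero _ hab
      field_simp
    have hT' : b * (a * b) ^ N * thetaTerm a b (n + 1) =
        (a * b) ^ (N + 1 + n : ℤ) * thetaTerm a b n := by
      rw [thetaTerm_add_one ha hb, zpow_add₀ hab, zpow_add_one₀ hab, zpow_natCast]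
      ring
    rw [show 2 * (N + 1) = 2 * N + 1 + 1 by ring, Finset.prod_range_succ, Finset.prod_range_succ]
    push_cast
    have hrec := invQFactorial_recurrence hab h N n
    generalize (∏ i ∈ Finset.range (2 * N), (1 - a * b * (a * b) ^ i)) = P
    linear_combination P * thetaTerm a b n * hrec -
      P * invQFactorial (a * b) (N + (n - 1)) * invQFactorial (a * b) (N - (n - 1)) * hT -
      P * invQFactorial (a * b) (N + (n + 1)) * invQFactorial (a * b) (N - (n + 1)) * hT'

lemma tendsto_invQFactorial {q : ℂ} (hq : ‖q‖ < 1) :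
    Filter.Tendsto (invQFactorial q) Filter.atTop (nhds (qPoch q q)⁻¹) := by
  have h1 := ((tendsto_prod_range_qPoch q hq).inv₀ (qPoch_ne_zero hq hq)).comp
    (Filter.tendsto_atTop_atTop.mpr fun b ↦ ⟨(b : ℤ), fun m hm ↦ by lia⟩ :
      Filter.Tendsto Int.toNat Filter.atTop Filter.atTop)
  refine h1.congr' ?_
  filter_upwards [Filter.eventually_ge_atTop 0] with m hm
  simp [invQFactorial, hm]

lemma exists_norm_invQFactorial_le {q : ℂ} (hq : ‖q‖ < 1) :
    ∃ B, ∀ m, ‖invQFactorial q m‖ ≤ B := by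
  have h1 := ((tendsto_prod_range_qPoch q hq).inv₀ (qPoch_ne_zero hq hq))
  obtain ⟨B, hB⟩ := h1.norm.bddAbove_range
  refine ⟨max B 0, fun m ↦ ?_⟩
  rw [invQFactorial]
  split_ifs
  · exact le_max_of_le_left (hB ⟨_, rfl⟩)
  · simp

/-- The Jacobi triple product identity, in Ramanujan's form. -/
theorem hasSum_thetaTerm (ha : a ≠ 0) (hb : b ≠ 0) (h : ‖a * b‖ < 1) :
    HasSum (thetaTerm a b)
      (qPoch (-a) (a * b) * qPoch (-b) (a * b) * qPoch (a * b) (a * b)) := by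
  have hs := summable_norm_thetaTerm ha hb h
  have hE := qPoch_ne_zero h h
  have hF := tendsto_prod_range_qPoch (a * b) h
  have hF2 : Filter.Tendsto (fun N ↦ ∏ i ∈ Finset.range (2 * N), (1 - a * b * (a * b) ^ i))
      Filter.atTop (nhds (qPoch (a * b) (a * b))) :=
    hF.comp (Filter.tendsto_id.const_mul_atTop' two_pos)
  obtain ⟨B, hB⟩ := exists_norm_invQFactorial_le h
  obtain ⟨C, hC⟩ := hF2.norm.bddAbove_range
  have hB0 : 0 ≤ B := (norm_nonneg _).trans (hB 0)
  have hC0 : 0 ≤ C := (norm_nonneg _).trans (hC ⟨0, rfl⟩)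
  have hlim := tendsto_tsum_of_dominated_convergence (𝓕 := Filter.atTop)
    (f := fun (N : ℕ) (n : ℤ) ↦ (∏ i ∈ Finset.range (2 * N), (1 - a * b * (a * b) ^ i)) *
        invQFactorial (a * b) (N + n) * invQFactorial (a * b) (N - n) * thetaTerm a b n)
    (g := fun n ↦ qPoch (a * b) (a * b) * (qPoch (a * b) (a * b))⁻¹ *
      (qPoch (a * b) (a * b))⁻¹ * thetaTerm a b n)
    (bound := fun n ↦ C * B * B * ‖thetaTerm a b n‖) (hs.mul_left _)
    (fun n ↦ ?_) (.of_forall fun N n ↦ ?_)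
  · have hlim2 := tendsto_nhds_unique hlim
      (((tendsto_prod_range_qPoch (-a) h).mul (tendsto_prod_range_qPoch (-b) h)).congr
        fun N ↦ (hasSum_finite_triple_product ha hb h N).tsum_eq.symm)
    rw [tsum_mul_left, mul_inv_cancel₀ hE, one_mul] at hlim2
    rw [← hlim2, mul_comm, mul_inv_cancel_left₀ hE]
    exact hs.of_norm.hasSum
  · refine ((hF2.mul ((tendsto_invQFactorial h).comp ?_)).mul
      ((tendsto_invQFactorial h).comp ?_)).mul_const _
    · exact Filter.tendsto_atTop_add_const_right _ n tendsto_natCast_atTop_atTop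
    · exact Filter.tendsto_atTop_add_const_right _ (-n) tendsto_natCast_atTop_atTop
  · simp only [norm_mul]
    gcongr
    · exact hC ⟨N, rfl⟩
    · exact hB _
    · exact hB _

end TripleProduct

section Theta

/-- Ramanujan's theta function `f(a, b) = ∑_{n ∈ ℤ} a ^ (n (n + 1) / 2) b ^ (n (n - 1) / 2)`. -/
noncomputable def ramanujanTheta (a b : ℂ) : ℂ := ∑' n : ℤ, thetaTerm a b n

variable {a b : ℂ}

lemma ramanujanTheta_eq (ha : a ≠ 0) (hb : b ≠ 0) (h : ‖a * b‖ < 1) :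
    ramanujanTheta a b = qPoch (-a) (a * b) * qPoch (-b) (a * b) * qPoch (a * b) (a * b) :=
  (hasSum_thetaTerm ha hb h).tsum_eq

lemma ramanujanTheta_comm (a b : ℂ) : ramanujanTheta a b = ramanujanTheta b a := by
  rw [ramanujanTheta, ← (Equiv.neg ℤ).tsum_eq]
  simp only [Equiv.neg_apply, thetaTerm_neg, ramanujanTheta]

lemma thetaTerm_eq_of_eq {n k : ℤ} (h : n * (n + 1) = 2 * k) :
    thetaTerm a b n = a ^ k * b ^ (k - n) := by
  rw [thetaTerm, show n * (n - 1) = 2 * (k - n) by linear_combination h, h,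
    Int.mul_ediv_cancel_left _ two_ne_zero, Int.mul_ediv_cancel_left _ two_ne_zero]

lemma thetaTerm_three_mul (ha : a ≠ 0) (hb : b ≠ 0) (m : ℤ) :
    thetaTerm a b (3 * m) = thetaTerm (a ^ 6 * b ^ 3) (a ^ 3 * b ^ 6) m := by
  obtain ⟨k, hk⟩ := (Int.even_mul_succ_self m).two_dvd
  rw [thetaTerm_eq_of_eq hk, thetaTerm_eq_of_eq (k := 9 * k - 3 * m) (by linear_combination 9 * hk),
    mul_zpow, mul_zpow, mul_mul_mul_comm]
  simp only [← zpow_natCast, ← zpow_mul]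
  rw [← zpow_add₀ ha, ← zpow_add₀ hb]
  push_cast
  ring_nf

lemma thetaTerm_three_mul_add_one (ha : a ≠ 0) (hb : b ≠ 0) (m : ℤ) :
    thetaTerm a b (3 * m + 1) = a * thetaTerm (a ^ 9 * b ^ 6) (b ^ 3) m := by
  obtain ⟨k, hk⟩ := (Int.even_mul_succ_self m).two_dvd
  rw [thetaTerm_eq_of_eq hk, thetaTerm_eq_of_eq (k := 9 * k + 1) (by linear_combination 9 * hk),
    mul_zpow, zpow_add_one₀ ha, mul_comm _ a, mul_assoc, mul_assoc]
  simp only [← zpow_natCast, ← zpow_mul]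
  rw [← zpow_add₀ hb]
  push_cast
  ring_nf

/-- The `3`-dissection of Ramanujan's theta function. -/
lemma ramanujanTheta_three_dissection (ha : a ≠ 0) (hb : b ≠ 0) (h : ‖a * b‖ < 1) :
    ramanujanTheta a b = ramanujanTheta (a ^ 6 * b ^ 3) (a ^ 3 * b ^ 6) +
      a * ramanujanTheta (a ^ 9 * b ^ 6) (b ^ 3) + b * ramanujanTheta (b ^ 9 * a ^ 6) (a ^ 3) := by
  have hs := (summable_norm_thetaTerm ha hb h).of_norm
  obtain ⟨e, he⟩ : ∃ e : Fin 3 × ℤ ≃ ℤ, ∀ i m, e (i, m) = 3 * m + i :=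
    ⟨(Equiv.prodComm _ _).trans (Int.divModEquiv 3).symm, fun i m ↦ by
      simp [Int.divModEquiv, mul_comm]⟩
  have hsum : ramanujanTheta a b = ∑ i : Fin 3, ∑' m : ℤ, thetaTerm a b (3 * m + (i : ℕ)) := by
    have he' : Summable fun p ↦ thetaTerm a b (e p) := e.summable_iff.mpr hs
    rw [ramanujanTheta, ← e.tsum_eq, he'.tsum_prod, tsum_fintype]
    simp only [he]
  have hneg (m : ℤ) :
      thetaTerm a b (3 * (-1 - m) + (2 : ℕ)) = b * thetaTerm (b ^ 9 * a ^ 6) (a ^ 3) m := by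
    rw [← thetaTerm_three_mul_add_one hb ha, ← thetaTerm_neg]
    push_cast
    ring_nf
  rw [hsum, Fin.sum_univ_three]
  congr 1
  · congr 1
    · simp [thetaTerm_three_mul ha hb, ramanujanTheta]
    · simp [thetaTerm_three_mul_add_one ha hb, ramanujanTheta, tsum_mul_left]
  · rw [← (Equiv.subLeft (-1 : ℤ)).tsum_eq, ramanujanTheta, ← tsum_mul_left]
    exact tsum_congr hneg

end Theta

section CubicIdentities

variable {x q : ℂ}

lemma norm_pow_lt_one (hx : ‖x‖ < 1) {n : ℕ} (hn : n ≠ 0) : ‖x ^ n‖ < 1 := by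
  rw [norm_pow]; exact pow_lt_one₀ (norm_nonneg x) hx hn

/-- The Euler function `(q; q)_∞`. -/
noncomputable def eulerFun (q : ℂ) : ℂ := qPoch q q

lemma eulerFun_ne_zero (hq : ‖q‖ < 1) : eulerFun q ≠ 0 := qPoch_ne_zero hq hq

lemma eulerFun_eq_mul_sq (hq : ‖q‖ < 1) : eulerFun q = qPoch q (q ^ 2) * eulerFun (q ^ 2) := by
  rw [eulerFun, qPoch_split_two q hq, ← sq, eulerFun]

lemma qPoch_neg_self_mul_eulerFun (hq : ‖q‖ < 1) :
    qPoch (-q) q * eulerFun q = eulerFun (q ^ 2) := by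
  rw [mul_comm, eulerFun, qPoch_mul_qPoch_neg q hq, eulerFun]

lemma qPoch_neg_one (hq : ‖q‖ < 1) : qPoch (-1) q = 2 * qPoch (-q) q := by
  have h0 : qPoch (-1) q = (1 - -1 * q ^ 0) * ∏' n : ℕ, (1 - -1 * q ^ (n + 1)) := by
    refine tprod_eq_zero_mul' ?_
    simpa [pow_succ', ← mul_assoc] using multipliable_one_sub_mul_pow (-q) hq
  rw [h0, qPoch]
  congr 1
  · norm_num
  · exact tprod_congr fun n ↦ by ring

/-- The product form of `φ(-x)`. -/
lemma ramanujanTheta_neg_neg (hx0 : x ≠ 0) (hx : ‖x‖ < 1) :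
    ramanujanTheta (-x) (-x) * eulerFun (x ^ 2) = eulerFun x ^ 2 := by
  have h2 := norm_pow_lt_one hx two_ne_zero
  rw [ramanujanTheta_eq (neg_ne_zero.mpr hx0) (neg_ne_zero.mpr hx0) (by simpa [sq] using h2),
    neg_mul_neg, neg_neg, ← sq, ← eulerFun, eulerFun_eq_mul_sq hx]
  ring_nf

/-- The product form of `2ψ(x)`. -/
lemma ramanujanTheta_one (hx0 : x ≠ 0) (hx : ‖x‖ < 1) :
    ramanujanTheta 1 x * eulerFun x = 2 * eulerFun (x ^ 2) ^ 2 := by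
  rw [ramanujanTheta_eq one_ne_zero hx0 (by simpa using hx), one_mul, qPoch_neg_one hx,
    ← qPoch_neg_self_mul_eulerFun hx, eulerFun]
  ring

/-- The product `f(-q, -q⁵) / φ(-q³)`. -/
noncomputable def cubicProduct (q : ℂ) : ℂ :=
  qPoch q (q ^ 6) * qPoch (q ^ 5) (q ^ 6) / qPoch (q ^ 3) (q ^ 6) ^ 2

lemma qPoch_cube_ne_zero (hq : ‖q‖ < 1) : qPoch (q ^ 3) (q ^ 6) ≠ 0 :=
  qPoch_ne_zero (norm_pow_lt_one hq (by norm_num)) (norm_pow_lt_one hq (by norm_num))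

lemma cubicProduct_mul_eulerFun (hq : ‖q‖ < 1) :
    cubicProduct q * (eulerFun (q ^ 2) * eulerFun (q ^ 3) ^ 3) =
      eulerFun q * eulerFun (q ^ 6) ^ 3 := by
  have h3 := eulerFun_eq_mul_sq (norm_pow_lt_one hq three_ne_zero)
  have h := qPoch_split_three q (norm_pow_lt_one hq two_ne_zero)
  have hne := qPoch_cube_ne_zero hq
  simp only [← pow_mul, ← pow_succ', Nat.reduceMul, Nat.reduceAdd] at h h3
  rw [cubicProduct, h3, eulerFun_eq_mul_sq hq, h]
  field_simp

lemma ramanujanTheta_neg_neg_dissection (hx0 : x ≠ 0) (hx : ‖x‖ < 1) :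
    ramanujanTheta (-x) (-x) =
      ramanujanTheta (-(x ^ 3) ^ 3) (-(x ^ 3) ^ 3) * (1 - 2 * (x * cubicProduct (x ^ 3))) := by
  have h2 := norm_pow_lt_one hx two_ne_zero
  have hq0 : x ^ 3 ≠ 0 := pow_ne_zero 3 hx0
  have hq := norm_pow_lt_one hx three_ne_zero
  have hne := neg_ne_zero.mpr hx0
  rw [ramanujanTheta_three_dissection hne hne (by simpa [sq] using h2),
    show (-x) ^ 6 * (-x) ^ 3 = -(x ^ 3) ^ 3 by ring,
    show (-x) ^ 3 * (-x) ^ 6 = -(x ^ 3) ^ 3 by ring,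
    show (-x) ^ 9 * (-x) ^ 6 = -(x ^ 3) ^ 5 by ring, show (-x) ^ 3 = -x ^ 3 by ring]
  generalize x ^ 3 = q at *
  have h6 := norm_pow_lt_one hq (n := 6) (by norm_num)
  have hc := qPoch_cube_ne_zero hq
  rw [ramanujanTheta_eq (neg_ne_zero.mpr (pow_ne_zero 3 hq0)) (neg_ne_zero.mpr (pow_ne_zero 3 hq0))
      (by rwa [show -q ^ 3 * -q ^ 3 = q ^ 6 by ring]),
    ramanujanTheta_eq (neg_ne_zero.mpr (pow_ne_zero 5 hq0)) (neg_ne_zero.mpr hq0)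
      (by rwa [show -q ^ 5 * -q = q ^ 6 by ring]), cubicProduct, show -q ^ 3 * -q ^ 3 = q ^ 6 by ring,
    show -q ^ 5 * -q = q ^ 6 by ring, neg_neg, neg_neg, neg_neg]
  field_simp
  ring

lemma ramanujanTheta_q_q_sq (hq0 : q ≠ 0) (hq : ‖q‖ < 1) :
    ramanujanTheta q (q ^ 2) * (eulerFun q * eulerFun (q ^ 6)) =
      eulerFun (q ^ 2) * eulerFun (q ^ 3) ^ 2 := by
  have h3 := norm_pow_lt_one hq three_ne_zero
  have h6 := qPoch_neg_self_mul_eulerFun h3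
  rw [← pow_mul] at h6
  have h := qPoch_split_three (-q) hq
  rw [neg_mul, neg_mul, ← sq, ← pow_succ'] at h
  rw [ramanujanTheta_eq hq0 (pow_ne_zero 2 hq0) (by rwa [← pow_succ']), ← pow_succ',
    ← qPoch_neg_self_mul_eulerFun hq, h, ← h6, eulerFun, eulerFun]
  ring

lemma ramanujanTheta_one_dissection (hx0 : x ≠ 0) (hx : ‖x‖ < 1) :
    ramanujanTheta 1 x * cubicProduct (x ^ 3) =
      ramanujanTheta 1 ((x ^ 3) ^ 3) * (1 + x * cubicProduct (x ^ 3)) := by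
  have hq0 : x ^ 3 ≠ 0 := pow_ne_zero 3 hx0
  have hq := norm_pow_lt_one hx three_ne_zero
  have hd : ramanujanTheta 1 x =
      2 * ramanujanTheta (x ^ 3) ((x ^ 3) ^ 2) + x * ramanujanTheta 1 ((x ^ 3) ^ 3) := by
    rw [ramanujanTheta_three_dissection one_ne_zero hx0 (by simpa using hx)]
    simp only [one_pow, one_mul, mul_one]
    rw [ramanujanTheta_comm (x ^ 6), ramanujanTheta_comm (x ^ 9), ← pow_mul, ← pow_mul]
    ring
  rw [hd]
  generalize x ^ 3 = q at *
  have h1 := ramanujanTheta_q_q_sq hq0 hq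
  have h2 := ramanujanTheta_one (pow_ne_zero 3 hq0) (norm_pow_lt_one hq three_ne_zero)
  have h3 := cubicProduct_mul_eulerFun hq
  rw [← pow_mul] at h2
  have e1 := eulerFun_ne_zero hq
  have e2 := eulerFun_ne_zero (norm_pow_lt_one hq (n := 2) (by norm_num))
  have e3 := eulerFun_ne_zero (norm_pow_lt_one hq (n := 3) (by norm_num))
  have e6 := eulerFun_ne_zero (norm_pow_lt_one hq (n := 6) (by norm_num))
  rw [← eq_div_iff (by positivity)] at h1 h2 h3
  rw [h1, h2, h3]
  field_simp

lemma eulerFun_cube_roots {ω : ℂ} (hω : ω ^ 2 + ω + 1 = 0) (hx : ‖x‖ < 1) :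
    eulerFun x * eulerFun (ω * x) * eulerFun (ω ^ 2 * x) * eulerFun ((x ^ 3) ^ 3) =
      eulerFun (x ^ 3) ^ 4 := by
  have hω3 : ω ^ 3 = 1 := by linear_combination (ω - 1) * hω
  have hωn : ‖ω‖ = 1 := by
    rw [← pow_left_inj₀ (norm_nonneg ω) zero_le_one three_ne_zero, ← norm_pow, hω3]; simp
  have hq := norm_pow_lt_one hx three_ne_zero
  have hsplit (y : ℂ) (hy : ‖y‖ < 1) (hyx : y ^ 3 = x ^ 3) :
      eulerFun y = qPoch y (x ^ 3) * qPoch (y ^ 2) (x ^ 3) * eulerFun (x ^ 3) := by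
    rw [eulerFun, qPoch_split_three y hy, ← sq, ← pow_succ', hyx, eulerFun]
  have h9 : eulerFun (x ^ 3) = qPoch (x ^ 3) ((x ^ 3) ^ 3) * qPoch ((x ^ 2) ^ 3) ((x ^ 3) ^ 3) *
      eulerFun ((x ^ 3) ^ 3) := by
    rw [eulerFun, qPoch_split_three _ hq, ← sq, ← pow_succ', pow_right_comm x 2, eulerFun]
  rw [hsplit x hx rfl, hsplit (ω * x) (by simpa [hωn] using hx) (by rw [mul_pow, hω3, one_mul]),
    hsplit (ω ^ 2 * x) (by simpa [hωn] using hx)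
      (by rw [mul_pow, ← pow_mul, mul_comm 2, pow_mul, hω3, one_pow, one_mul]),
    show (ω ^ 2 * x) ^ 2 = ω * x ^ 2 by linear_combination ω * x ^ 2 * hω3, mul_pow]
  have h1 := qPoch_mul_cube_roots hω x hq
  have h2 := qPoch_mul_cube_roots hω (x ^ 2) hq
  rw [← h1, ← h2] at h9
  linear_combination -(eulerFun (x ^ 3) ^ 3) * h9

lemma exists_sq_add_self_add_one_eq_zero : ∃ ω : ℂ, ω ^ 2 + ω + 1 = 0 := by
  have h := (Complex.isPrimitiveRoot_exp 3 three_ne_zero).geom_sum_eq_zero (by norm_num)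
  simp only [Finset.sum_range_succ, Finset.sum_range_zero] at h
  exact ⟨_, by linear_combination h⟩

/-- Taking the product of a relation over `x`, `ωx`, `ω²x` for a primitive cube root of unity `ω`
produces `(x³; x³)⁴ / (x⁹; x⁹)` from Euler functions. -/
lemma exists_cube_root_orbit (hx0 : x ≠ 0) (hx : ‖x‖ < 1) :
    ∃ y z : ℂ, (y ≠ 0 ∧ ‖y‖ < 1 ∧ y ^ 3 = x ^ 3) ∧ (z ≠ 0 ∧ ‖z‖ < 1 ∧ z ^ 3 = x ^ 3) ∧
      (∀ r : ℂ, (1 + r * x) * (1 + r * y) * (1 + r * z) = 1 + r ^ 3 * x ^ 3) ∧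
      eulerFun x * eulerFun y * eulerFun z * eulerFun ((x ^ 3) ^ 3) = eulerFun (x ^ 3) ^ 4 ∧
      eulerFun (x ^ 2) * eulerFun (y ^ 2) * eulerFun (z ^ 2) * eulerFun ((x ^ 3) ^ 6) =
        eulerFun ((x ^ 3) ^ 2) ^ 4 := by
  obtain ⟨ω, hω⟩ := exists_sq_add_self_add_one_eq_zero
  have hω3 : ω ^ 3 = 1 := by linear_combination (ω - 1) * hω
  have hωn : ‖ω‖ = 1 := by
    rw [← pow_left_inj₀ (norm_nonneg ω) zero_le_one three_ne_zero, ← norm_pow, hω3]; simp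
  have hω0 : ω ≠ 0 := norm_ne_zero_iff.mp (by simp [hωn])
  refine ⟨ω * x, ω ^ 2 * x, ⟨mul_ne_zero hω0 hx0, by simpa [hωn] using hx, ?_⟩,
    ⟨mul_ne_zero (pow_ne_zero 2 hω0) hx0, by simpa [hωn] using hx, ?_⟩, fun r ↦ ?_,
    eulerFun_cube_roots hω hx, ?_⟩
  · linear_combination x ^ 3 * hω3
  · linear_combination x ^ 3 * (ω ^ 3 + 1) * hω3
  · linear_combination (r * x + r ^ 2 * x ^ 2 * ω) * hω + r ^ 3 * x ^ 3 * hω3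
  · have h := eulerFun_cube_roots hω (norm_pow_lt_one hx two_ne_zero)
    rw [show (ω * x) ^ 2 = ω ^ 2 * x ^ 2 by ring,
      show (ω ^ 2 * x) ^ 2 = ω * x ^ 2 by linear_combination ω * x ^ 2 * hω3,
      show (x ^ 3) ^ 2 = (x ^ 2) ^ 3 by ring, show (x ^ 3) ^ 6 = ((x ^ 2) ^ 3) ^ 3 by ring, ← h]
    ring

/-- The identity `1 - 8c³ = φ(-q)⁴ / φ(-q³)⁴`. -/
lemma one_sub_eight_mul_cubicProduct (hx0 : x ≠ 0) (hx : ‖x‖ < 1) :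
    (1 - 8 * (x ^ 3 * cubicProduct (x ^ 3) ^ 3)) *
        (eulerFun ((x ^ 3) ^ 2) ^ 4 * eulerFun ((x ^ 3) ^ 3) ^ 8) =
      eulerFun (x ^ 3) ^ 8 * eulerFun ((x ^ 3) ^ 6) ^ 4 := by
  obtain ⟨y, z, ⟨hy0, hy, hyx⟩, ⟨hz0, hz, hzx⟩, hroots, h1, h2⟩ := exists_cube_root_orbit hx0 hx
  have hdx := ramanujanTheta_neg_neg_dissection hx0 hx
  have hdy := ramanujanTheta_neg_neg_dissection hy0 hy
  have hdz := ramanujanTheta_neg_neg_dissection hz0 hz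
  have px := ramanujanTheta_neg_neg hx0 hx
  have py := ramanujanTheta_neg_neg hy0 hy
  have pz := ramanujanTheta_neg_neg hz0 hz
  have hq := norm_pow_lt_one hx three_ne_zero
  have p3 := ramanujanTheta_neg_neg (pow_ne_zero 3 (pow_ne_zero 3 hx0))
    (norm_pow_lt_one hq three_ne_zero)
  rw [← pow_mul (x ^ 3)] at p3
  rw [hdx] at px
  rw [hdy, hyx] at py
  rw [hdz, hzx] at pz
  have e3 := eulerFun_ne_zero (norm_pow_lt_one hq (n := 3) (by norm_num))
  have e6 := eulerFun_ne_zero (norm_pow_lt_one hq (n := 6) (by norm_num))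
  have hprod : ramanujanTheta (-(x ^ 3) ^ 3) (-(x ^ 3) ^ 3) ^ 3 *
      (1 - 8 * (x ^ 3 * cubicProduct (x ^ 3) ^ 3)) *
        (eulerFun (x ^ 2) * eulerFun (y ^ 2) * eulerFun (z ^ 2)) =
      (eulerFun x * eulerFun y * eulerFun z) ^ 2 := by
    rw [mul_pow, mul_pow, ← px, ← py, ← pz]
    linear_combination -(ramanujanTheta (-(x ^ 3) ^ 3) (-(x ^ 3) ^ 3) ^ 3 *
      (eulerFun (x ^ 2) * eulerFun (y ^ 2) * eulerFun (z ^ 2))) *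
        hroots (-2 * cubicProduct (x ^ 3))
  rw [← eq_div_iff e6] at p3 h2
  rw [← eq_div_iff e3] at h1
  rw [p3, h1, h2] at hprod
  generalize x ^ 3 * cubicProduct (x ^ 3) ^ 3 = C at *
  generalize eulerFun (x ^ 3) = E₁ at *
  generalize eulerFun ((x ^ 3) ^ 2) = E₂ at *
  generalize eulerFun ((x ^ 3) ^ 3) = E₃ at *
  generalize eulerFun ((x ^ 3) ^ 6) = E₆ at *
  field_simp at hprod
  linear_combination hprod

/-- The identity `1 + c³ = c³ ψ(q)⁴ / (q ψ(q³)⁴)`. -/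
lemma one_add_cubicProduct (hx0 : x ≠ 0) (hx : ‖x‖ < 1) :
    (1 + x ^ 3 * cubicProduct (x ^ 3) ^ 3) *
        (eulerFun ((x ^ 3) ^ 6) ^ 8 * eulerFun (x ^ 3) ^ 4) =
      cubicProduct (x ^ 3) ^ 3 * (eulerFun ((x ^ 3) ^ 2) ^ 8 * eulerFun ((x ^ 3) ^ 3) ^ 4) := by
  obtain ⟨y, z, ⟨hy0, hy, hyx⟩, ⟨hz0, hz, hzx⟩, hroots, h1, h2⟩ := exists_cube_root_orbit hx0 hx
  have hdx := ramanujanTheta_one_dissection hx0 hx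
  have hdy := ramanujanTheta_one_dissection hy0 hy
  have hdz := ramanujanTheta_one_dissection hz0 hz
  rw [hyx] at hdy
  rw [hzx] at hdz
  have px := ramanujanTheta_one hx0 hx
  have py := ramanujanTheta_one hy0 hy
  have pz := ramanujanTheta_one hz0 hz
  have hq := norm_pow_lt_one hx three_ne_zero
  have p3 := ramanujanTheta_one (pow_ne_zero 3 (pow_ne_zero 3 hx0))
    (norm_pow_lt_one hq three_ne_zero)
  rw [← pow_mul (x ^ 3)] at p3
  have e1 := eulerFun_ne_zero hq
  have e3 := eulerFun_ne_zero (norm_pow_lt_one hq (n := 3) (by norm_num))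
  have e6 := eulerFun_ne_zero (norm_pow_lt_one hq (n := 6) (by norm_num))
  have hprod : cubicProduct (x ^ 3) ^ 3 *
        (8 * (eulerFun (x ^ 2) * eulerFun (y ^ 2) * eulerFun (z ^ 2)) ^ 2) =
      ramanujanTheta 1 ((x ^ 3) ^ 3) ^ 3 * (1 + x ^ 3 * cubicProduct (x ^ 3) ^ 3) *
        (eulerFun x * eulerFun y * eulerFun z) := by
    calc _ = cubicProduct (x ^ 3) ^ 3 * ((2 * eulerFun (x ^ 2) ^ 2) *
          (2 * eulerFun (y ^ 2) ^ 2) * (2 * eulerFun (z ^ 2) ^ 2)) := by ring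
      _ = (ramanujanTheta 1 x * cubicProduct (x ^ 3)) *
          (ramanujanTheta 1 y * cubicProduct (x ^ 3)) *
          (ramanujanTheta 1 z * cubicProduct (x ^ 3)) *
            (eulerFun x * eulerFun y * eulerFun z) := by rw [← px, ← py, ← pz]; ring
      _ = _ := by
        rw [hdx, hdy, hdz]
        linear_combination ramanujanTheta 1 ((x ^ 3) ^ 3) ^ 3 *
          (eulerFun x * eulerFun y * eulerFun z) * hroots (cubicProduct (x ^ 3))
  rw [← eq_div_iff e6] at h2
  rw [← eq_div_iff e3] at p3 h1
  rw [p3, h1, h2] at hprod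
  generalize x ^ 3 * cubicProduct (x ^ 3) ^ 3 = C at *
  generalize eulerFun (x ^ 3) = E₁ at *
  generalize eulerFun ((x ^ 3) ^ 2) = E₂ at *
  generalize eulerFun ((x ^ 3) ^ 3) = E₃ at *
  generalize eulerFun ((x ^ 3) ^ 6) = E₆ at *
  field_simp at hprod
  linear_combination (-1 / 8) * hprod

/-- The cubic identity in terms of Euler functions. -/
lemma cubicProduct_quadratic (hx0 : x ≠ 0) (hx : ‖x‖ < 1) :
    (1 - 7 * (x ^ 3 * cubicProduct (x ^ 3) ^ 3) - 8 * (x ^ 3 * cubicProduct (x ^ 3) ^ 3) ^ 2) *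
        (eulerFun ((x ^ 3) ^ 3) ^ 4 * eulerFun ((x ^ 3) ^ 6) ^ 4) =
      cubicProduct (x ^ 3) ^ 3 * (eulerFun (x ^ 3) ^ 4 * eulerFun ((x ^ 3) ^ 2) ^ 4) := by
  have hA := one_add_cubicProduct hx0 hx
  have hB := one_sub_eight_mul_cubicProduct hx0 hx
  have hq := norm_pow_lt_one hx three_ne_zero
  have e1 := eulerFun_ne_zero hq
  have e2 := eulerFun_ne_zero (norm_pow_lt_one hq (n := 2) (by norm_num))
  have e3 := eulerFun_ne_zero (norm_pow_lt_one hq (n := 3) (by norm_num))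
  have e6 := eulerFun_ne_zero (norm_pow_lt_one hq (n := 6) (by norm_num))
  rw [← eq_div_iff (by positivity)] at hA hB
  generalize x ^ 3 * cubicProduct (x ^ 3) ^ 3 = C at *
  generalize eulerFun (x ^ 3) = E₁ at *
  generalize eulerFun ((x ^ 3) ^ 2) = E₂ at *
  generalize eulerFun ((x ^ 3) ^ 3) = E₃ at *
  generalize eulerFun ((x ^ 3) ^ 6) = E₆ at *
  rw [show 1 - 7 * C - 8 * C ^ 2 = (1 + C) * (1 - 8 * C) by ring, hA, hB]
  field_simp

end CubicIdentities

section Modular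

lemma tprod_one_sub_pow_succ (q : ℂ) : ∏' n : ℕ, (1 - q ^ (n + 1)) = eulerFun q :=
  tprod_congr fun n ↦ by rw [pow_succ']

lemma dedekindEta_nat_mul (k : ℕ) (τ : ℂ) :
    dedekindEta (k * τ) =
      Complex.exp (Real.pi * I * τ / 12) ^ k * eulerFun (nome τ ^ k) := by
  rw [dedekindEta, ← tprod_one_sub_pow_succ, ← Complex.exp_nat_mul]
  congr 1
  · ring_nf
  · refine tprod_congr fun n ↦ ?_
    rw [nome, ← Complex.exp_nat_mul, ← Complex.exp_nat_mul]
    push_cast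
    ring_nf

lemma norm_exp_two_pi_I_mul_lt_one {τ : ℂ} (hτ : 0 < τ.im) :
    ‖Complex.exp (2 * Real.pi * I * τ)‖ < 1 :=
  UpperHalfPlane.norm_exp_two_pi_I_lt_one ⟨τ, hτ⟩

lemma c_eq {τ : ℂ} (hτ : 0 < τ.im) :
    c τ = Complex.exp (2 * Real.pi * I * τ / 3) * cubicProduct (nome τ) := by
  have hq : ‖nome τ‖ < 1 := norm_exp_two_pi_I_mul_lt_one hτ
  have h6 : ‖nome τ ^ 6‖ < 1 := norm_pow_lt_one hq (by norm_num)
  have hm (a : ℂ) := multipliable_one_sub_mul_pow a h6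
  rw [c, cubicProduct]
  congr 1
  generalize nome τ = q at *
  have hterm (n : ℕ) : (1 - q ^ (6 * (n + 1) - 1)) * (1 - q ^ (6 * (n + 1) - 5)) /
        (1 - q ^ (6 * (n + 1) - 3)) ^ 2 =
      (1 - q * (q ^ 6) ^ n) * (1 - q ^ 5 * (q ^ 6) ^ n) / (1 - q ^ 3 * (q ^ 6) ^ n) ^ 2 := by
    rw [show 6 * (n + 1) - 1 = 5 + 6 * n by lia, show 6 * (n + 1) - 5 = 1 + 6 * n by lia,
      show 6 * (n + 1) - 3 = 3 + 6 * n by lia]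
    ring
  simp only [hterm]
  exact (((hm q).hasProd.mul (hm (q ^ 5)).hasProd).div₀ ((hm (q ^ 3)).hasProd.pow 2)
    (pow_ne_zero 2 (qPoch_cube_ne_zero hq))).tprod_eq

end Modular

/-- For `τ` in the upper half-plane,
`(1 − 7c(τ)³ − 8c(τ)⁶)·η(3τ)⁴·η(6τ)⁴ = c(τ)³·η(τ)⁴·η(2τ)⁴`. -/
theorem cubicCF_eta_quotient_cubed (τ : ℂ) (hτ : 0 < τ.im) :
    (1 - 7 * c τ ^ 3 - 8 * c τ ^ 6) * dedekindEta (3 * τ) ^ 4 * dedekindEta (6 * τ) ^ 4 =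
      c τ ^ 3 * dedekindEta τ ^ 4 * dedekindEta (2 * τ) ^ 4 := by
  have h1 := dedekindEta_nat_mul 1 τ
  have h2 := dedekindEta_nat_mul 2 τ
  have h3 := dedekindEta_nat_mul 3 τ
  have h6 := dedekindEta_nat_mul 6 τ
  push_cast at h1 h2 h3 h6
  rw [one_mul, pow_one, pow_one] at h1
  rw [h1, h2, h3, h6, c_eq hτ]
  obtain ⟨x, hxdef⟩ : ∃ x, x = Complex.exp (2 * Real.pi * I * τ / 3) := ⟨_, rfl⟩
  obtain ⟨t, ht⟩ : ∃ t, t = Complex.exp (Real.pi * I * τ / 12) := ⟨_, rfl⟩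
  have hx0 : x ≠ 0 := hxdef ▸ Complex.exp_ne_zero _
  have hx : ‖x‖ < 1 := by
    rw [hxdef, mul_div_assoc]
    exact norm_exp_two_pi_I_mul_lt_one (by simpa using hτ)
  have hxn : nome τ = x ^ 3 := by
    rw [nome, hxdef, ← Complex.exp_nat_mul]
    push_cast
    ring_nf
  have hxt : x ^ 3 = t ^ 24 := by
    rw [hxdef, ht, ← Complex.exp_nat_mul, ← Complex.exp_nat_mul]
    push_cast
    ring_nf
  have key := cubicProduct_quadratic hx0 hx
  rw [← hxdef, ← ht, hxn, mul_pow x,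
    show (x * cubicProduct (x ^ 3)) ^ 6 = (x ^ 3 * cubicProduct (x ^ 3) ^ 3) ^ 2 by ring]
  linear_combination t ^ 36 * key + cubicProduct (x ^ 3) ^ 3 * t ^ 12 *
    (eulerFun (x ^ 3) ^ 4 * eulerFun ((x ^ 3) ^ 2) ^ 4) * (-hxt)
end
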